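/- Discrete coercivity estimate (Step 1 of the proof of Lemma 3.6 of the paper): assume Assumption H. There exists a set Ω₀ ∈ ℱ with ℙ(Ω₀) = 1 such that for every ω ∈ Ω₀, every half-open axis-parallel box A ⊂ ℝ^d and every family (u_ε)_{ε>0} of functions u_ε : εℤ^d → ℝⁿ with E* := limsup_{ε↓0} E_ε(ω;u_ε,A) < ∞, one has limsup_{ε↓0} ε^d Σ_{z∈εℤ^d∩A} Σ_{b∈𝒩₀} |∂_b^ε u_ε(z)|^{pβ/(β+1)} ≤ (c₁ E* + c₁² |A| Σ_{b∈𝒩₀} E[λ_b])^{β/(β+1)} · (|A| Σ_{b∈𝒩₀} E[λ_b^{−β}])^{1/(β+1)}; in particular this limsup is finite. -/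

import Mathlib

open MeasureTheory Filter Metric Set
open scoped Classical
open scoped ENNReal Topology Pointwise

noncomputable section

namespace StochHom

/-- `ℝ^d` with the Euclidean norm. -/
abbrev Rd (d : ℕ) : Type := EuclideanSpace ℝ (Fin d)

/-- `ℝ^n` with the Euclidean norm. -/
abbrev Rn (n : ℕ) : Type := EuclideanSpace ℝ (Fin n)

/-- The lattice `ℤ^d`. -/
abbrev Zd (d : ℕ) : Type := Fin d → ℤ

variable {d n : ℕ}

/-- The embedding of the lattice `ℤ^d` into `ℝ^d`. -/
def toRd (z : Zd d) : Rd d := (EuclideanSpace.equiv (Fin d) ℝ).symm fun i => (z i : ℝ)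

/-- The standard basis vectors `eᵢ` of `ℤ^d`. -/
def stdb (i : Fin d) : Zd d := fun j => if j = i then 1 else 0

/-- The interaction range `R = max {4√d, max_{b ∈ ℰ₀} |b|}`. -/
def irange (d : ℕ) (E0 : Finset (Zd d)) : ℝ :=
  max (4 * Real.sqrt d) (sSup ((fun b : Zd d => ‖toRd b‖) '' (E0 : Set (Zd d))))

variable {Ω : Type*} [MeasurableSpace Ω]

/-- The energy `E₁(ω; u, ℤ^d ∩ A)`. -/
def energy1 (τ : Zd d → Ω → Ω) (E0 : Finset (Zd d)) (V : Zd d → Ω → Rn n → ℝ)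
    (ω : Ω) (u : Zd d → Rn n) (A : Set (Rd d)) : ℝ :=
  ∑' z : Zd d, if toRd z ∈ A then
      ∑ b ∈ E0, V b (τ z ω) ((‖toRd b‖)⁻¹ • (u (z + b) - u z)) else 0

/-- The scaled energy `E_ε(ω; u, A)`, where a function `u : εℤ^d → ℝ^n` is identified with a
function on `ℤ^d` via `z ↦ u(εz)`, so that `∂_b^ε u (z) = (u (z+b) - u z)/(ε |b|)`. -/
def energyE (τ : Zd d → Ω → Ω) (E0 : Finset (Zd d)) (V : Zd d → Ω → Rn n → ℝ)
    (ε : ℝ) (ω : Ω) (u : Zd d → Rn n) (A : Set (Rd d)) : ℝ :=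
  ε ^ d * ∑' z : Zd d, if ε • toRd z ∈ A then
      ∑ b ∈ E0, V b (τ z ω) ((ε * ‖toRd b‖)⁻¹ • (u (z + b) - u z)) else 0

/-- The localized minimal energy `m_F(ω; A)`. -/
def mF (τ : Zd d → Ω → Ω) (E0 : Finset (Zd d)) (V : Zd d → Ω → Rn n → ℝ)
    (ω : Ω) (F : Rd d →L[ℝ] Rn n) (A : Set (Rd d)) : ℝ :=
  ⨅ φ : {φ : Zd d → Rn n // ∀ z : Zd d, infDist (toRd z) Aᶜ ≤ irange d E0 → φ z = 0},
    energy1 τ E0 V ω (fun z => F (toRd z) + φ.1 z) A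

/-- The half-open cube `[0,k)^d ⊂ ℝ^d`. -/
def cube (d k : ℕ) : Set (Rd d) := {x | ∀ i, 0 ≤ x i ∧ x i < (k : ℝ)}

/-- The homogenized energy density `W₀(F) = inf_{k ≥ 1} k⁻ᵈ E[m_F(·, [0,k)^d)]`. -/
def W0 (P : Measure Ω) (τ : Zd d → Ω → Ω) (E0 : Finset (Zd d))
    (V : Zd d → Ω → Rn n → ℝ) (F : Rd d →L[ℝ] Rn n) : ℝ :=
  ⨅ k : {k : ℕ // 0 < k}, (((k : ℕ) : ℝ) ^ d)⁻¹ * ∫ ω, mF τ E0 V ω F (cube d k) ∂P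

/-- Half-open axis-parallel box `Π_i [aᵢ, bᵢ)`. -/
def halfBox (a b : Fin d → ℝ) : Set (Rd d) := {x | ∀ i, a i ≤ x i ∧ x i < b i}

/-- Open axis-parallel box `Π_i (aᵢ, bᵢ)`. -/
def openBox (a b : Fin d → ℝ) : Set (Rd d) := {x | ∀ i, a i < x i ∧ x i < b i}

/-- Closed axis-parallel box `Π_i [aᵢ, bᵢ]`. -/
def closedBox (a b : Fin d → ℝ) : Set (Rd d) := {x | ∀ i, a i ≤ x i ∧ x i ≤ b i}

/-- Half-open axis-parallel box with integer corners. -/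
def intBox (a b : Zd d) : Set (Rd d) := {x | ∀ i, (a i : ℝ) ≤ x i ∧ x i < (b i : ℝ)}

/-- The periodic cell minimization `W^{(k)}(ω; F)`. -/
def Wper (τ : Zd d → Ω → Ω) (E0 : Finset (Zd d)) (V : Zd d → Ω → Rn n → ℝ)
    (k : ℕ) (ω : Ω) (F : Rd d →L[ℝ] Rn n) : ℝ :=
  ⨅ φ : {φ : Zd d → Rn n // ∀ z z' : Zd d, φ (z + k • z') = φ z},
    ((k : ℝ) ^ d)⁻¹ * energy1 τ E0 V ω (fun z => F (toRd z) + φ.1 z) (cube d k)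

/-- The discrete cube of radius `N` around `z`. -/
def bx (z : Zd d) (N : ℕ) : Finset (Zd d) :=
  Fintype.piFinset fun i => Finset.Icc (z i - N) (z i + N)

lemma mem_bx {z w : Zd d} {N : ℕ} : w ∈ bx z N ↔ ∀ i, z i - N ≤ w i ∧ w i ≤ z i + N := by
  simp [bx, Fintype.mem_piFinset]

lemma card_bx (z : Zd d) (N : ℕ) : (bx z N).card = (2 * N + 1) ^ d := by
  simp only [bx, Fintype.card_piFinset, Int.card_Icc]
  rw [Finset.prod_congr rfl (g := fun _ => 2 * N + 1)]
  · simp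
  · intro i _
    omega

lemma coe_bx (z : Zd d) (N : ℕ) : (bx z N : Set (Zd d)) = closedBall z (N : ℝ) := by
  ext w
  rw [Finset.mem_coe, mem_bx, mem_closedBall, dist_pi_le_iff (by positivity)]
  refine forall_congr' fun i => ?_
  rw [Int.dist_eq, abs_le]
  constructor
  · rintro ⟨h1, h2⟩
    have h1' : ((z i - N : ℤ) : ℝ) ≤ w i := by exact_mod_cast h1
    have h2' : ((w i : ℤ) : ℝ) ≤ ((z i + N : ℤ) : ℝ) := by exact_mod_cast h2
    push_cast at h1' h2'
    constructor <;> linarith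
  · rintro ⟨h1, h2⟩
    constructor
    · have : ((z i - N : ℤ) : ℝ) ≤ w i := by push_cast; linarith
      exact_mod_cast this
    · have : ((w i : ℤ) : ℝ) ≤ ((z i + N : ℤ) : ℝ) := by push_cast; linarith
      exact_mod_cast this

/-- Discrete Vitali covering bound. -/
lemma vitali_count (F : Zd d → ℝ≥0∞) (l : ℝ≥0∞) (S T : Finset (Zd d)) (N : Zd d → ℕ)
    (hS : ∀ z ∈ S, l * ((2 * N z + 1 : ℕ) : ℝ≥0∞) ^ d ≤ ∑ w ∈ bx z (N z), F w)
    (hT : ∀ z ∈ S, bx z (N z) ⊆ T) :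
    l * S.card ≤ 5 ^ d * ∑ w ∈ T, F w := by
  obtain ⟨u, huS, hdisj, hcov⟩ := Vitali.exists_disjoint_subfamily_covering_enlargement_closedBall
    (S : Set (Zd d)) id (fun z => (N z : ℝ)) (((∑ z ∈ S, N z : ℕ)) : ℝ)
    (fun a ha => by
      exact_mod_cast Finset.single_le_sum (f := N) (fun _ _ => Nat.zero_le _) ha) 5 (by norm_num)
  have hufin : u.Finite := S.finite_toSet.subset huS
  lift u to Finset (Zd d) using hufin
  have huSS : u ⊆ S := by exact_mod_cast huS
  have hsub : S ⊆ u.biUnion fun z => bx z (5 * N z) := by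
    intro z hz
    obtain ⟨b, hb, hzb⟩ := hcov z hz
    rw [Finset.mem_biUnion]
    refine ⟨b, hb, ?_⟩
    rw [← Finset.mem_coe, coe_bx]
    have : z ∈ closedBall (id z) (N z : ℝ) := by simp
    have := hzb this
    simpa using this
  have hcard : S.card ≤ ∑ z ∈ u, 5 ^ d * (2 * N z + 1) ^ d := by
    refine (Finset.card_le_card hsub).trans (Finset.card_biUnion_le.trans ?_)
    refine Finset.sum_le_sum fun z _ => ?_
    rw [card_bx, ← mul_pow]
    exact Nat.pow_le_pow_left (by omega) _
  have hpd : (u : Set (Zd d)).PairwiseDisjoint fun z => bx z (N z) := by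
    intro x hx y hy hxy
    have := hdisj hx hy hxy
    simp only [Function.onFun, id] at this ⊢
    rw [← Finset.disjoint_coe, coe_bx, coe_bx]
    exact this
  calc l * S.card ≤ l * ((∑ z ∈ u, 5 ^ d * (2 * N z + 1) ^ d : ℕ) : ℝ≥0∞) := by
        gcongr
    _ = 5 ^ d * ∑ z ∈ u, l * ((2 * N z + 1 : ℕ) : ℝ≥0∞) ^ d := by
        push_cast
        rw [Finset.mul_sum, Finset.mul_sum]
        refine Finset.sum_congr rfl fun z _ => ?_
        ring
    _ ≤ 5 ^ d * ∑ z ∈ u, ∑ w ∈ bx z (N z), F w := by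
        gcongr with z hz
        exact hS z (huSS hz)
    _ = 5 ^ d * ∑ w ∈ u.biUnion fun z => bx z (N z), F w := by
        rw [Finset.sum_biUnion hpd]
    _ ≤ 5 ^ d * ∑ w ∈ T, F w := by
        gcongr
        exact Finset.biUnion_subset.2 fun z hz => hT z (huSS hz)

/-- The maximal inequality for `ℤ^d`-actions (weak type (1,1)). -/
lemma maximal_ineq (P : Measure Ω) (τ : Zd d → Ω → Ω)
    (hτadd : ∀ x y : Zd d, τ (x + y) = τ x ∘ τ y)
    (hτmp : ∀ z : Zd d, MeasurePreserving (τ z) P P)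
    (f : Ω → ℝ≥0∞) (hf : Measurable f) (l : ℝ≥0∞) :
    l * P {ω | ∃ N : ℕ, l * ((2 * N + 1 : ℕ) : ℝ≥0∞) ^ d ≤ ∑ z ∈ bx 0 N, f (τ z ω)}
      ≤ 10 ^ d * ∫⁻ ω, f ω ∂P := by
  let E : ℕ → Set Ω := fun R =>
    {ω | ∃ N ≤ R, l * ((2 * N + 1 : ℕ) : ℝ≥0∞) ^ d ≤ ∑ z ∈ bx 0 N, f (τ z ω)}
  have hτm : ∀ z, Measurable (τ z) := fun z => (hτmp z).measurable
  have hEm : ∀ R, MeasurableSet (E R) := by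
    intro R
    have : E R = ⋃ N ∈ Set.Iic R,
        {ω | l * ((2 * N + 1 : ℕ) : ℝ≥0∞) ^ d ≤ ∑ z ∈ bx 0 N, f (τ z ω)} := by
      ext ω; simp [E]
    rw [this]
    refine MeasurableSet.biUnion (Set.to_countable _) fun N _ => ?_
    refine measurableSet_le measurable_const ?_
    exact Finset.measurable_sum _ fun z _ => hf.comp (hτm z)
  have hEmono : Monotone E := by
    intro R R' h ω
    rintro ⟨N, hN, h2⟩
    exact ⟨N, hN.trans h, h2⟩
  have hU : {ω | ∃ N : ℕ, l * ((2 * N + 1 : ℕ) : ℝ≥0∞) ^ d ≤ ∑ z ∈ bx 0 N, f (τ z ω)}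
      = ⋃ R, E R := by
    ext ω
    simp only [E, Set.mem_ofPred_eq, Set.mem_iUnion]
    constructor
    · rintro ⟨N, h⟩
      exact ⟨N, N, le_rfl, h⟩
    · rintro ⟨R, N, _, h⟩
      exact ⟨N, h⟩
  rw [hU, hEmono.measure_iUnion, ENNReal.mul_iSup]
  refine iSup_le fun R => ?_
  -- pointwise bound
  have hpt : ∀ ω, l * ∑ z ∈ bx (0 : Zd d) R, (E R).indicator (fun _ => (1 : ℝ≥0∞)) (τ z ω)
      ≤ 5 ^ d * ∑ w ∈ bx (0 : Zd d) (2 * R), f (τ w ω) := by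
    intro ω
    have hex : ∀ z : Zd d, ∃ N : ℕ, τ z ω ∈ E R →
        N ≤ R ∧ l * ((2 * N + 1 : ℕ) : ℝ≥0∞) ^ d ≤ ∑ w ∈ bx z N, f (τ w ω) := by
      intro z
      by_cases hz : τ z ω ∈ E R
      · obtain ⟨N, hN, h⟩ := hz
        refine ⟨N, fun _ => ⟨hN, h.trans (le_of_eq ?_)⟩⟩
        refine Finset.sum_bij (fun w _ => w + z) ?_ ?_ ?_ ?_
        · intro w hw
          rw [mem_bx] at hw ⊢
          intro i
          have := hw i
          simp only [Pi.zero_apply, Pi.add_apply] at this ⊢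
          omega
        · intro a _ b _ h
          simpa using h
        · intro w hw
          refine ⟨w - z, ?_, by simp⟩
          rw [mem_bx] at hw ⊢
          intro i
          have := hw i
          simp only [Pi.zero_apply, Pi.sub_apply] at this ⊢
          omega
        · intro w _
          rw [hτadd]; rfl
      · exact ⟨0, fun h => absurd h hz⟩
    choose N hN using hex
    have := vitali_count (fun w => f (τ w ω)) l ((bx (0 : Zd d) R).filter fun z => τ z ω ∈ E R)
      (bx 0 (2 * R)) N ?_ ?_
    · refine le_trans (le_of_eq ?_) this
      congr 1
      rw [Finset.card_filter]
      push_cast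
      refine Finset.sum_congr rfl fun z _ => ?_
      simp [Set.indicator_apply]
    · intro z hz
      exact (hN z (Finset.mem_filter.1 hz).2).2
    · intro z hz w hw
      have h1 := (hN z (Finset.mem_filter.1 hz).2).1
      have h2 := (Finset.mem_filter.1 hz).1
      rw [mem_bx] at h2 hw ⊢
      intro i
      have h2 := h2 i
      have hw := hw i
      simp only [Pi.zero_apply] at h2 ⊢
      push_cast
      omega
  have hint := lintegral_mono (μ := P) hpt
  have hind : Measurable ((E R).indicator (fun _ => (1 : ℝ≥0∞))) :=
    measurable_const.indicator (hEm R)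
  have hm1 : ∀ z, Measurable fun ω => (E R).indicator (fun _ => (1 : ℝ≥0∞)) (τ z ω) :=
    fun z => hind.comp (hτm z)
  have hm2 : ∀ z, Measurable fun ω => f (τ z ω) := fun z => hf.comp (hτm z)
  rw [lintegral_const_mul _ (Finset.measurable_sum _ fun z _ => hm1 z),
    lintegral_const_mul _ (Finset.measurable_sum _ fun z _ => hm2 z),
    lintegral_finsetSum _ (fun z _ => hm1 z),
    lintegral_finsetSum _ (fun z _ => hm2 z)] at hint
  have e1 : ∀ z, ∫⁻ ω, (E R).indicator (fun _ => (1 : ℝ≥0∞)) (τ z ω) ∂P = P (E R) := by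
    intro z
    rw [(hτmp z).lintegral_comp hind, lintegral_indicator_const (hEm R), one_mul]
  have e2 : ∀ z, ∫⁻ ω, f (τ z ω) ∂P = ∫⁻ ω, f ω ∂P := fun z => (hτmp z).lintegral_comp hf
  simp only [e1, e2, Finset.sum_const, card_bx, nsmul_eq_mul] at hint
  set I := ∫⁻ ω, f ω ∂P
  have hne : (((2 * R + 1) ^ d : ℕ) : ℝ≥0∞) ≠ 0 := by
    have : (2 * R + 1) ^ d ≠ 0 := by positivity
    exact_mod_cast this
  have hle : (((2 * (2 * R) + 1) ^ d : ℕ) : ℝ≥0∞) ≤ 2 ^ d * (((2 * R + 1) ^ d : ℕ) : ℝ≥0∞) := by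
    have : (2 * (2 * R) + 1) ^ d ≤ 2 ^ d * (2 * R + 1) ^ d := by
      rw [← mul_pow]
      exact Nat.pow_le_pow_left (by omega) _
    exact_mod_cast this
  have h3 : (((2 * R + 1) ^ d : ℕ) : ℝ≥0∞) * (l * P (E R))
      ≤ (((2 * R + 1) ^ d : ℕ) : ℝ≥0∞) * (10 ^ d * I) := by
    calc _ = l * ((((2 * R + 1) ^ d : ℕ) : ℝ≥0∞) * P (E R)) := by ring
      _ ≤ 5 ^ d * ((((2 * (2 * R) + 1) ^ d : ℕ) : ℝ≥0∞) * I) := hint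
      _ ≤ 5 ^ d * ((2 ^ d * (((2 * R + 1) ^ d : ℕ) : ℝ≥0∞)) * I) := by gcongr
      _ = _ := by
        have : (10 : ℝ≥0∞) ^ d = 5 ^ d * 2 ^ d := by rw [← mul_pow]; norm_num
        rw [this]; ring
  exact (ENNReal.mul_le_mul_iff_right hne (ENNReal.natCast_ne_top _)).1 h3

/-- The lattice points `z` with `ε z` in the half-open box. -/
def bix (a b : Fin d → ℝ) (ε : ℝ) : Finset (Zd d) :=
  Fintype.piFinset fun i => Finset.Ico ⌈a i / ε⌉ ⌈b i / ε⌉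

lemma mem_bix {a b : Fin d → ℝ} {ε : ℝ} (hε : 0 < ε) {z : Zd d} :
    z ∈ bix a b ε ↔ ε • toRd z ∈ halfBox a b := by
  simp only [bix, Fintype.mem_piFinset, Finset.mem_Ico, halfBox, Set.mem_ofPred_eq]
  refine forall_congr' fun i => ?_
  have : (ε • toRd z) i = ε * z i := by simp [toRd]
  rw [this, Int.ceil_le, Int.lt_ceil, div_le_iff₀ hε, lt_div_iff₀ hε, mul_comm]

lemma tsum_bix {a b : Fin d → ℝ} {ε : ℝ} (hε : 0 < ε) (F : Zd d → ℝ) :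
    (∑' z : Zd d, if ε • toRd z ∈ halfBox a b then F z else 0) = ∑ z ∈ bix a b ε, F z := by
  rw [tsum_eq_sum (s := bix a b ε)]
  · exact Finset.sum_congr rfl fun z hz => if_pos ((mem_bix hε).1 hz)
  · intro z hz
    exact if_neg fun h => hz ((mem_bix hε).2 h)

lemma tendsto_card_box {a b : Fin d → ℝ} {L U : Fin d → ℝ → ℤ}
    (hL : ∀ i, Tendsto (fun ε => ε * (L i ε : ℝ)) (𝓝[>] 0) (𝓝 (a i)))
    (hU : ∀ i, Tendsto (fun ε => ε * (U i ε : ℝ)) (𝓝[>] 0) (𝓝 (b i))) :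
    Tendsto (fun ε : ℝ => ε ^ d *
      ((Fintype.piFinset fun i => Finset.Ico (L i ε) (U i ε)).card : ℝ)) (𝓝[>] 0)
      (𝓝 (∏ i, max (b i - a i) 0)) := by
  have h : Tendsto (fun ε : ℝ => ∏ i, max (ε * (U i ε : ℝ) - ε * (L i ε : ℝ)) 0) (𝓝[>] 0)
      (𝓝 (∏ i, max (b i - a i) 0)) :=
    tendsto_finsetProd _ fun i _ => ((hU i).sub (hL i)).max tendsto_const_nhds
  refine h.congr' ?_
  filter_upwards [self_mem_nhdsWithin] with ε hε
  have hε : 0 < ε := hε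
  rw [Fintype.card_piFinset]
  push_cast
  have : ε ^ d = ∏ _i : Fin d, ε := by simp
  rw [this, ← Finset.prod_mul_distrib]
  refine Finset.prod_congr rfl fun i _ => ?_
  rw [Int.card_Ico, ← mul_sub]
  have : (((U i ε - L i ε).toNat : ℕ) : ℝ) = max ((U i ε : ℝ) - L i ε) 0 := by
    have h := Int.toNat_eq_max (U i ε - L i ε)
    have h2 : ((((U i ε - L i ε).toNat : ℕ) : ℤ) : ℝ) = ((max (U i ε - L i ε) 0 : ℤ) : ℝ) := by
      rw [h]
    push_cast at h2
    exact h2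
  rw [this, mul_max_of_nonneg _ _ hε.le, mul_zero]

lemma tendsto_near (x C : ℝ) (L : ℝ → ℤ)
    (h : ∀ ε, 0 < ε → |(L ε : ℝ) - x / ε| ≤ C) :
    Tendsto (fun ε => ε * (L ε : ℝ)) (𝓝[>] 0) (𝓝 x) := by
  rw [tendsto_iff_norm_sub_tendsto_zero]
  have h0 : Tendsto (fun ε : ℝ => ε * C) (𝓝[>] 0) (𝓝 0) := by
    have : Tendsto (fun ε : ℝ => ε * C) (𝓝 0) (𝓝 (0 * C)) := tendsto_id.mul_const C
    rw [zero_mul] at this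
    exact this.mono_left nhdsWithin_le_nhds
  refine squeeze_zero' (Eventually.of_forall fun _ => norm_nonneg _) ?_ h0
  filter_upwards [self_mem_nhdsWithin] with ε hε
  have hε : 0 < ε := hε
  have : ε * (L ε : ℝ) - x = ε * ((L ε : ℝ) - x / ε) := by field_simp
  rw [this, norm_mul, Real.norm_eq_abs, Real.norm_eq_abs, abs_of_pos hε]
  exact mul_le_mul_of_nonneg_left (h ε hε) hε.le

lemma ceil_near (y : ℝ) : |(⌈y⌉ : ℝ) - y| ≤ 1 := by
  rw [abs_le]
  have := Int.le_ceil y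
  have := Int.ceil_lt_add_one y
  constructor <;> linarith

lemma tendsto_card_bix (a b : Fin d → ℝ) :
    Tendsto (fun ε : ℝ => ε ^ d * ((bix a b ε).card : ℝ)) (𝓝[>] 0)
      (𝓝 (∏ i, max (b i - a i) 0)) :=
  tendsto_card_box (fun _ => tendsto_near _ 1 _ fun _ _ => ceil_near _)
    (fun _ => tendsto_near _ 1 _ fun _ _ => ceil_near _)

lemma tendsto_card_inter (a b : Fin d → ℝ) (w : Zd d) :
    Tendsto (fun ε : ℝ => ε ^ d *
      ((bix a b ε ∩ (bix a b ε).map (addRightEmbedding w)).card : ℝ)) (𝓝[>] 0)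
      (𝓝 (∏ i, max (b i - a i) 0)) := by
  have key : ∀ (y : ℝ) (k : ℤ), |((⌈y⌉ + k : ℤ) : ℝ) - y| ≤ 1 + |(k : ℝ)| := by
    intro y k
    push_cast
    have : (⌈y⌉ : ℝ) + k - y = ((⌈y⌉ : ℝ) - y) + k := by ring
    rw [this]
    exact (abs_add_le _ _).trans (by linarith [ceil_near y])
  have key0 : ∀ (y : ℝ) (k : ℤ), |(⌈y⌉ : ℝ) - y| ≤ 1 + |(k : ℝ)| := by
    intro y k
    linarith [ceil_near y, abs_nonneg (k : ℝ)]
  have := tendsto_card_box (a := a) (b := b)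
    (L := fun i ε => max ⌈a i / ε⌉ (⌈a i / ε⌉ + w i))
    (U := fun i ε => min ⌈b i / ε⌉ (⌈b i / ε⌉ + w i))
    (fun i => tendsto_near _ (1 + |(w i : ℝ)|) _ fun ε _ => by
      rcases max_choice ⌈a i / ε⌉ (⌈a i / ε⌉ + w i) with h | h <;> rw [h]
      · exact key0 _ _
      · exact key _ _)
    (fun i => tendsto_near _ (1 + |(w i : ℝ)|) _ fun ε _ => by
      rcases min_choice ⌈b i / ε⌉ (⌈b i / ε⌉ + w i) with h | h <;> rw [h]
      · exact key0 _ _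
      · exact key _ _)
  convert this using 5 with ε
  ext z
  simp only [bix, Finset.mem_inter, Finset.mem_map, Fintype.mem_piFinset, Finset.mem_Ico,
    addRightEmbedding_apply]
  constructor
  · rintro ⟨h1, y, h2, rfl⟩ i
    have h1 := h1 i
    have h2 := h2 i
    simp only [Pi.add_apply] at h1 ⊢
    omega
  · intro h
    refine ⟨fun i => ?_, z - w, fun i => ?_, by simp⟩
    · have := h i
      omega
    · have := h i
      simp only [Pi.sub_apply]
      omega

lemma volume_halfBox (a b : Fin d → ℝ) :
    (volume (halfBox a b)).toReal = ∏ i, max (b i - a i) 0 := by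
  have h : halfBox a b = (MeasurableEquiv.toLp 2 (Fin d → ℝ)).symm ⁻¹'
      (Set.univ.pi fun i => Set.Ico (a i) (b i)) := by
    ext x
    simp [halfBox, Set.mem_pi]
  rw [h, (EuclideanSpace.volume_preserving_symm_measurableEquiv_toLp (Fin d)).measure_preimage
    (MeasurableSet.univ_pi fun i => measurableSet_Ico).nullMeasurableSet, Real.volume_pi_Ico,
    ENNReal.toReal_prod]
  refine Finset.prod_congr rfl fun i _ => ?_
  rw [ENNReal.toReal_ofReal']

/-- Averages of coboundaries of bounded functions vanish. -/
lemma tendsto_cobdry (a b : Fin d → ℝ) (w : Zd d) (G : Zd d → ℝ) (C : ℝ)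
    (hG : ∀ z, |G z| ≤ C) :
    Tendsto (fun ε : ℝ => ε ^ d * ∑ z ∈ bix a b ε, (G z - G (z + w))) (𝓝[>] 0) (𝓝 0) := by
  have hlim : Tendsto (fun ε : ℝ => 2 * C * (ε ^ d * ((bix a b ε).card : ℝ) - ε ^ d *
      ((bix a b ε ∩ (bix a b ε).map (addRightEmbedding w)).card : ℝ))) (𝓝[>] 0) (𝓝 0) := by
    have := ((tendsto_card_bix a b).sub (tendsto_card_inter a b w)).const_mul (2 * C)
    simpa using this
  rw [tendsto_zero_iff_norm_tendsto_zero]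
  refine squeeze_zero' (Eventually.of_forall fun _ => norm_nonneg _) ?_ hlim
  filter_upwards [self_mem_nhdsWithin] with ε hε
  have hε : 0 < ε := hε
  set I := bix a b ε
  set J := I.map (addRightEmbedding w)
  have hJ : ∑ z ∈ I, G (z + w) = ∑ z ∈ J, G z := by simp [J]
  have hJc : J.card = I.card := Finset.card_map _
  have bnd : ∀ S : Finset (Zd d), |∑ z ∈ S, G z| ≤ C * S.card := fun S => by
    refine (Finset.abs_sum_le_sum_abs _ _).trans ((Finset.sum_le_sum fun z _ => hG z).trans ?_)
    simp [mul_comm]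
  have e1 : ∑ z ∈ I, (G z - G (z + w)) = ∑ z ∈ I \ J, G z - ∑ z ∈ J \ I, G z := by
    rw [Finset.sum_sub_distrib, hJ, Finset.sum_sdiff_sub_sum_sdiff]
  have c1 : ((I \ J).card : ℝ) = I.card - (I ∩ J).card := by
    have := Finset.card_sdiff_add_card_inter I J
    rw [← this]; push_cast; ring
  have c2 : ((J \ I).card : ℝ) = I.card - (I ∩ J).card := by
    have := Finset.card_sdiff_add_card_inter J I
    rw [← hJc, ← this, Finset.inter_comm J I]; push_cast; ring
  rw [e1, norm_mul, Real.norm_of_nonneg (by positivity), Real.norm_eq_abs]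
  have := (abs_sub (∑ z ∈ I \ J, G z) (∑ z ∈ J \ I, G z)).trans
    (add_le_add (bnd (I \ J)) (bnd (J \ I)))
  rw [c1, c2] at this
  calc _ ≤ ε ^ d * (C * (I.card - (I ∩ J).card) + C * (I.card - (I ∩ J).card)) := by gcongr
    _ = _ := by ring

/-- The scaled box is contained in a cube of comparable size. -/
lemma bix_subset_bx (a b : Fin d → ℝ) (m : ℝ) (ha : ∀ i, |a i| ≤ m)
    (hb : ∀ i, |b i| ≤ m) {ε : ℝ} (hε : 0 < ε) : bix a b ε ⊆ bx 0 ⌈m / ε⌉₊ := by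
  intro z hz
  rw [mem_bx]
  intro i
  rw [mem_bix hε] at hz
  have h := hz i
  have he : (ε • toRd z) i = ε * z i := by simp [toRd]
  rw [he] at h
  have h1 := abs_le.1 (ha i)
  have h2 := abs_le.1 (hb i)
  have hc := Nat.le_ceil (m / ε)
  rw [div_le_iff₀ hε] at hc
  simp only [Pi.zero_apply, zero_sub, zero_add]
  constructor
  · have : (-(⌈m / ε⌉₊ : ℤ) : ℝ) ≤ z i := by
      push_cast
      by_contra hcon
      push Not at hcon
      nlinarith
    exact_mod_cast this
  · have : (z i : ℝ) ≤ ((⌈m / ε⌉₊ : ℤ) : ℝ) := by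
      push_cast
      by_contra hcon
      push Not at hcon
      nlinarith
    exact_mod_cast this

lemma ae_all_shift {P : Measure Ω} {τ : Zd d → Ω → Ω}
    (hτmp : ∀ z : Zd d, MeasurePreserving (τ z) P P) {q : Ω → Prop} (h : ∀ᵐ ω ∂P, q ω) :
    ∀ᵐ ω ∂P, ∀ z, q (τ z ω) :=
  ae_all_iff.2 fun z => (hτmp z).quasiMeasurePreserving.ae h

lemma maximal_ineq₀ (P : Measure Ω) (τ : Zd d → Ω → Ω)
    (hτadd : ∀ x y : Zd d, τ (x + y) = τ x ∘ τ y)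
    (hτmp : ∀ z : Zd d, MeasurePreserving (τ z) P P)
    (f : Ω → ℝ≥0∞) (hf : AEMeasurable f P) (l : ℝ≥0∞) :
    l * P {ω | ∃ N : ℕ, l * ((2 * N + 1 : ℕ) : ℝ≥0∞) ^ d ≤ ∑ z ∈ bx 0 N, f (τ z ω)}
      ≤ 10 ^ d * ∫⁻ ω, f ω ∂P := by
  have h := maximal_ineq P τ hτadd hτmp (hf.mk f) hf.measurable_mk l
  rw [lintegral_congr_ae hf.ae_eq_mk]
  refine le_trans ?_ h
  gcongr 1
  refine measure_mono_ae ?_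
  filter_upwards [ae_all_shift hτmp hf.ae_eq_mk] with ω hω
  rintro ⟨N, hN⟩
  exact ⟨N, hN.trans (le_of_eq (Finset.sum_congr rfl fun z _ => hω z))⟩

/-- `f` satisfies the pointwise ergodic theorem along all scaled boxes. -/
def Good (P : Measure Ω) (τ : Zd d → Ω → Ω) (f : Ω → ℝ) : Prop :=
  ∀ᵐ ω ∂P, ∀ a b : Fin d → ℝ, Tendsto (fun ε : ℝ => ε ^ d * ∑ z ∈ bix a b ε, f (τ z ω)) (𝓝[>] 0)
    (𝓝 ((∏ i, max (b i - a i) 0) * ∫ ω', f ω' ∂P))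

lemma good_closure (P : Measure Ω) [IsProbabilityMeasure P] (τ : Zd d → Ω → Ω)
    (hτadd : ∀ x y : Zd d, τ (x + y) = τ x ∘ τ y)
    (hτmp : ∀ z : Zd d, MeasurePreserving (τ z) P P)
    (f : Ω → ℝ) (hf : Integrable f P)
    (H : ∀ δ : ℝ≥0∞, δ ≠ 0 → ∃ h : Ω → ℝ, Integrable h P ∧ Good P τ h ∧
      eLpNorm (f - h) 1 P ≤ δ) : Good P τ f := by
  have H' : ∀ k : ℕ, ∃ h : Ω → ℝ, Integrable h P ∧ Good P τ h ∧
      eLpNorm (f - h) 1 P ≤ ((k : ℝ≥0∞) + 1)⁻¹ := fun k => H _ (by simp)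
  choose h hint hgood hnorm using H'
  simp only [eLpNorm_one_eq_lintegral_enorm, Pi.sub_apply] at hnorm
  -- maximal function small infinitely often
  have hmax : ∀ m : ℕ, ∀ᵐ ω ∂P, ∃ k ≥ m, ∀ N : ℕ,
      ∑ z ∈ bx 0 N, ‖f (τ z ω) - h k (τ z ω)‖ₑ ≤
        ((m : ℝ≥0∞) + 1)⁻¹ * ((2 * N + 1 : ℕ) : ℝ≥0∞) ^ d := by
    intro m
    rw [ae_iff]
    set l : ℝ≥0∞ := ((m : ℝ≥0∞) + 1)⁻¹ with hl
    have hl0 : l ≠ 0 := by simp [hl]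
    have hlt : l ≠ ⊤ := by simp [hl]
    have hb : ∀ k ≥ m, l * P {ω | ¬ ∃ k ≥ m, ∀ N : ℕ,
        ∑ z ∈ bx 0 N, ‖f (τ z ω) - h k (τ z ω)‖ₑ ≤ l * ((2 * N + 1 : ℕ) : ℝ≥0∞) ^ d}
        ≤ 10 ^ d * ((k : ℝ≥0∞) + 1)⁻¹ := by
      intro k hk
      refine le_trans ?_ ((maximal_ineq₀ P τ hτadd hτmp (fun ω => ‖f ω - h k ω‖ₑ)
        (hf.sub (hint k)).aestronglyMeasurable.enorm l).trans (by gcongr; exact hnorm k))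
      gcongr 1
      refine measure_mono fun ω hω => ?_
      simp only [Set.mem_ofPred_eq] at hω ⊢
      push Not at hω
      obtain ⟨N, hN⟩ := hω k hk
      exact ⟨N, hN.le⟩
    have ht : Tendsto (fun k : ℕ => (10 : ℝ≥0∞) ^ d * ((k : ℝ≥0∞) + 1)⁻¹) atTop (𝓝 0) := by
      have : Tendsto (fun k : ℕ => ((k : ℝ≥0∞) + 1)⁻¹) atTop (𝓝 0) := by
        have := (tendsto_add_atTop_iff_nat 1).2 ENNReal.tendsto_inv_nat_nhds_zero
        simpa using this
      have := ENNReal.Tendsto.const_mul this (a := (10 : ℝ≥0∞) ^ d)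
        (Or.inr (ENNReal.pow_ne_top (by norm_num)))
      simpa using this
    have := ge_of_tendsto ht ((eventually_ge_atTop m).mono hb)
    have := le_antisymm this (zero_le)
    exact (mul_eq_zero.1 this).resolve_left hl0
  filter_upwards [ae_all_iff.2 hmax, ae_all_iff.2 hgood] with ω hω hgω a b
  set vol : ℝ := ∏ i, max (b i - a i) 0 with hvol
  have hvol0 : 0 ≤ vol := Finset.prod_nonneg fun i _ => le_max_right _ _
  obtain ⟨M, hM0, ha, hb⟩ : ∃ M : ℝ, 0 ≤ M ∧ (∀ i, |a i| ≤ M) ∧ ∀ i, |b i| ≤ M := by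
    refine ⟨∑ i, |a i| + ∑ i, |b i|, by positivity, fun i => ?_, fun i => ?_⟩
    · have := Finset.single_le_sum (f := fun i => |a i|) (fun _ _ => abs_nonneg _)
        (Finset.mem_univ i)
      have : 0 ≤ ∑ i, |b i| := by positivity
      linarith
    · have := Finset.single_le_sum (f := fun i => |b i|) (fun _ _ => abs_nonneg _)
        (Finset.mem_univ i)
      have : 0 ≤ ∑ i, |a i| := by positivity
      linarith
  rw [Metric.tendsto_nhds]
  intro η hη
  set K : ℝ := (2 * M + 3) ^ d + vol + 1 with hK
  have hKpos : 0 < K := by positivity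
  obtain ⟨m, hm⟩ := exists_nat_gt (2 * K / η)
  have hm1 : K * ((m : ℝ) + 1)⁻¹ < η / 2 := by
    rw [div_lt_iff₀ hη] at hm
    rw [mul_inv_lt_iff₀ (by positivity)]
    nlinarith
  obtain ⟨k, hkm, hk⟩ := hω m
  have hT := Metric.tendsto_nhds.1 (hgω k a b) (η / 2) (by positivity)
  have hlt1 : ∀ᶠ ε : ℝ in 𝓝[>] 0, ε < 1 :=
    nhdsWithin_le_nhds (eventually_lt_nhds zero_lt_one)
  filter_upwards [hT, hlt1, self_mem_nhdsWithin] with ε hε1 hε2 hε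
  have hε : 0 < ε := hε
  rw [Real.dist_eq] at hε1 ⊢
  set N := ⌈M / ε⌉₊
  -- real version of maximal bound
  have hreal : ∑ z ∈ bx 0 N, |f (τ z ω) - h k (τ z ω)| ≤ ((m : ℝ) + 1)⁻¹ * (2 * N + 1) ^ d := by
    have := hk N
    have e : ∑ z ∈ bx 0 N, ‖f (τ z ω) - h k (τ z ω)‖ₑ
        = ENNReal.ofReal (∑ z ∈ bx 0 N, |f (τ z ω) - h k (τ z ω)|) := by
      rw [ENNReal.ofReal_sum_of_nonneg fun _ _ => abs_nonneg _]
      refine Finset.sum_congr rfl fun z _ => ?_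
      rw [Real.enorm_eq_ofReal_abs]
    have e2 : ((m : ℝ≥0∞) + 1)⁻¹ * ((2 * N + 1 : ℕ) : ℝ≥0∞) ^ d
        = ENNReal.ofReal (((m : ℝ) + 1)⁻¹ * (2 * N + 1) ^ d) := by
      rw [ENNReal.ofReal_mul (by positivity), ENNReal.ofReal_inv_of_pos (by positivity),
        ENNReal.ofReal_pow (by positivity)]
      congr 2
      · rw [ENNReal.ofReal_add (by positivity) (by positivity)]; simp
      · rw [← ENNReal.ofReal_natCast]; push_cast; rfl
    rw [e, e2, ENNReal.ofReal_le_ofReal_iff (by positivity)] at this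
    exact this
  have hN : ε * (2 * N + 1) ≤ 2 * M + 3 := by
    have : (N : ℝ) < M / ε + 1 := Nat.ceil_lt_add_one (by positivity)
    have h2 : ε * N ≤ ε * (M / ε + 1) := by gcongr
    have h3 : ε * (M / ε + 1) = M + ε := by field_simp
    nlinarith
  have h1 : |ε ^ d * ∑ z ∈ bix a b ε, f (τ z ω) - ε ^ d * ∑ z ∈ bix a b ε, h k (τ z ω)|
      ≤ (2 * M + 3) ^ d * ((m : ℝ) + 1)⁻¹ := by
    rw [← mul_sub, ← Finset.sum_sub_distrib, abs_mul, abs_of_pos (pow_pos hε d)]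
    calc _ ≤ ε ^ d * ∑ z ∈ bix a b ε, |f (τ z ω) - h k (τ z ω)| := by
          gcongr; exact Finset.abs_sum_le_sum_abs _ _
      _ ≤ ε ^ d * ∑ z ∈ bx 0 N, |f (τ z ω) - h k (τ z ω)| := by
          refine mul_le_mul_of_nonneg_left ?_ (by positivity)
          exact Finset.sum_le_sum_of_subset_of_nonneg (f := fun z => |f (τ z ω) - h k (τ z ω)|)
              (bix_subset_bx a b M ha hb hε)
            fun _ _ _ => abs_nonneg _
      _ ≤ ε ^ d * (((m : ℝ) + 1)⁻¹ * (2 * N + 1) ^ d) := by gcongr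
      _ = (ε * (2 * N + 1)) ^ d * ((m : ℝ) + 1)⁻¹ := by rw [mul_pow]; ring
      _ ≤ _ := by gcongr
  have h2 : |vol * ∫ ω', h k ω' ∂P - vol * ∫ ω', f ω' ∂P| ≤ vol * ((m : ℝ) + 1)⁻¹ := by
    rw [← mul_sub, abs_mul, abs_of_nonneg hvol0]
    gcongr
    rw [abs_sub_comm, ← integral_sub hf (hint k)]
    have : ‖∫ ω', f ω' - h k ω' ∂P‖ₑ ≤ ENNReal.ofReal ((m : ℝ) + 1)⁻¹ := by
      refine (enorm_integral_le_lintegral_enorm _).trans ((hnorm k).trans ?_)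
      rw [ENNReal.ofReal_inv_of_pos (by positivity),
        ENNReal.ofReal_add (by positivity) (by positivity)]
      simp only [ENNReal.ofReal_natCast, ENNReal.ofReal_one]
      gcongr
    rw [Real.enorm_eq_ofReal_abs, ENNReal.ofReal_le_ofReal_iff (by positivity)] at this
    exact this
  calc _ = |(ε ^ d * ∑ z ∈ bix a b ε, f (τ z ω) - ε ^ d * ∑ z ∈ bix a b ε, h k (τ z ω))
        + (ε ^ d * ∑ z ∈ bix a b ε, h k (τ z ω) - vol * ∫ ω', h k ω' ∂P)
        + (vol * ∫ ω', h k ω' ∂P - vol * ∫ ω', f ω' ∂P)| := by congr 1; ring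
    _ ≤ _ := abs_add_three _ _ _
    _ < (2 * M + 3) ^ d * ((m : ℝ) + 1)⁻¹ + η / 2 + vol * ((m : ℝ) + 1)⁻¹ := by linarith
    _ ≤ K * ((m : ℝ) + 1)⁻¹ + η / 2 := by
        have : 0 ≤ ((m : ℝ) + 1)⁻¹ := by positivity
        rw [hK]; linarith
    _ < η := by linarith

lemma good_const (P : Measure Ω) [IsProbabilityMeasure P] (τ : Zd d → Ω → Ω) (c : ℝ) :
    Good P τ fun _ => c := by
  refine Eventually.of_forall fun ω a b => ?_
  have := (tendsto_card_bix a b).mul_const c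
  simpa [mul_assoc] using this

lemma good_add (P : Measure Ω) (τ : Zd d → Ω → Ω) {f g : Ω → ℝ}
    (hf : Integrable f P) (hg : Integrable g P) (h1 : Good P τ f) (h2 : Good P τ g) :
    Good P τ (f + g) := by
  filter_upwards [h1, h2] with ω h1 h2 a b
  have := (h1 a b).add (h2 a b)
  simp only [Pi.add_apply, Finset.sum_add_distrib]
  rw [integral_add hf hg]
  simpa only [mul_add] using this

lemma good_smul (P : Measure Ω) (τ : Zd d → Ω → Ω) {f : Ω → ℝ} (c : ℝ) (h1 : Good P τ f) :
    Good P τ (c • f) := by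
  filter_upwards [h1] with ω h1 a b
  have := (h1 a b).const_mul c
  simp only [Pi.smul_apply, smul_eq_mul, ← Finset.mul_sum]
  rw [integral_const_mul]
  simpa only [mul_left_comm] using this

lemma good_cobdry (P : Measure Ω) [IsProbabilityMeasure P] (τ : Zd d → Ω → Ω)
    (hτadd : ∀ x y : Zd d, τ (x + y) = τ x ∘ τ y)
    (hτmp : ∀ z : Zd d, MeasurePreserving (τ z) P P)
    (g : Ω → ℝ) (hg : Integrable g P) (C : ℝ) (hC : ∀ ω, |g ω| ≤ C) (w : Zd d) :
    Good P τ (g - g ∘ τ w) := by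
  have h0 : ∫ ω, (g - g ∘ τ w) ω ∂P = 0 := by
    have h1 : ∫ ω, g (τ w ω) ∂P = ∫ ω, g ω ∂P := by
      have := integral_map (hτmp w).measurable.aemeasurable (f := g)
        (by rw [(hτmp w).map_eq]; exact hg.aestronglyMeasurable)
      rw [← this, (hτmp w).map_eq]
    have hi : Integrable (g ∘ τ w) P := (hτmp w).integrable_comp_of_integrable hg
    have := integral_sub hg hi
    simp only [Function.comp_apply] at this
    simp only [Pi.sub_apply, Function.comp_apply, this, h1, sub_self]
  refine Eventually.of_forall fun ω a b => ?_
  rw [h0, mul_zero]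
  have := tendsto_cobdry a b w (fun z => g (τ z ω)) C (fun z => hC _)
  refine this.congr fun ε => ?_
  congr 1
  refine Finset.sum_congr rfl fun z _ => ?_
  simp only [Pi.sub_apply, Function.comp_apply]
  rw [add_comm z w, hτadd]; rfl

lemma good_congr (P : Measure Ω) (τ : Zd d → Ω → Ω)
    (hτmp : ∀ z : Zd d, MeasurePreserving (τ z) P P) {f g : Ω → ℝ} (hfg : f =ᵐ[P] g)
    (h : Good P τ f) : Good P τ g := by
  filter_upwards [h, ae_all_shift hτmp hfg] with ω h hω a b
  rw [← integral_congr_ae hfg]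
  refine (h a b).congr fun ε => ?_
  congr 1
  exact Finset.sum_congr rfl fun z _ => hω z

lemma inv_const (P : Measure Ω) [IsProbabilityMeasure P] (τ : Zd d → Ω → Ω) (hτ0 : τ 0 = id)
    (hτadd : ∀ x y : Zd d, τ (x + y) = τ x ∘ τ y)
    (hτmp : ∀ z : Zd d, MeasurePreserving (τ z) P P)
    (hτerg : ∀ B : Set Ω, MeasurableSet B → (∀ z : Zd d, τ z ⁻¹' B = B) → P B = 0 ∨ P B = 1)
    (v : Ω → ℝ) (hv : Measurable v) (hinv : ∀ z, v ∘ τ z =ᵐ[P] v) :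
    ∃ c, v =ᵐ[P] Function.const Ω c := by
  refine exists_eventuallyEq_const_of_forall_separating MeasurableSet fun U hU => ?_
  set B : Set Ω := {ω | ∀ z, v (τ z ω) ∈ U} with hB
  have hBm : MeasurableSet B := by
    have : B = ⋂ z, (τ z) ⁻¹' (v ⁻¹' U) := by ext; simp [hB]
    rw [this]
    exact MeasurableSet.iInter fun z => (hτmp z).measurable (hv hU)
  have hBinv : ∀ z, τ z ⁻¹' B = B := by
    intro z
    ext ω
    simp only [hB, Set.mem_preimage, Set.mem_ofPred_eq]
    constructor
    · intro h y
      have := h (y - z)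
      have e : τ (y - z) (τ z ω) = τ y ω := by
        have := congrFun (hτadd (y - z) z) ω
        simp only [sub_add_cancel, Function.comp_apply] at this
        exact this.symm
      rwa [e] at this
    · intro h y
      have := congrFun (hτadd y z) ω
      simp only [Function.comp_apply] at this
      rw [← this]
      exact h _
  have hae : ∀ᵐ ω ∂P, (ω ∈ B ↔ v ω ∈ U) := by
    filter_upwards [ae_all_iff.2 hinv] with ω hω
    constructor
    · intro h
      have := h 0
      rwa [hτ0] at this
    · intro h z
      have := hω z
      simp only [Function.comp_apply] at this
      rwa [this]
  rcases hτerg B hBm hBinv with h | h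
  · right
    have : ∀ᵐ ω ∂P, ω ∉ B := measure_eq_zero_iff_ae_notMem.1 h
    filter_upwards [this, hae] with ω h1 h2 h3
    exact h1 (h2.2 h3)
  · left
    have : ∀ᵐ ω ∂P, ω ∈ B := mem_ae_iff_prob_eq_one hBm |>.2 h
    filter_upwards [this, hae] with ω h1 h2
    exact h2.1 h1

/-- The isometry on `L²` induced by `τ z`. -/
def koop (P : Measure Ω) (τ : Zd d → Ω → Ω)
    (hτmp : ∀ z : Zd d, MeasurePreserving (τ z) P P) (z : Zd d) :
    Lp ℝ 2 P →ₗᵢ[ℝ] Lp ℝ 2 P := Lp.compMeasurePreservingₗᵢ ℝ (τ z) (hτmp z)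

lemma koop_coe (P : Measure Ω) (τ : Zd d → Ω → Ω)
    (hτmp : ∀ z : Zd d, MeasurePreserving (τ z) P P) (z : Zd d) (g : Lp ℝ 2 P) :
    koop P τ hτmp z g =ᵐ[P] g ∘ τ z :=
  Lp.coeFn_compMeasurePreserving g (hτmp z)

/-- The span of the `L²` coboundaries. -/
def cobSpan (P : Measure Ω) (τ : Zd d → Ω → Ω)
    (hτmp : ∀ z : Zd d, MeasurePreserving (τ z) P P) : Submodule ℝ (Lp ℝ 2 P) :=
  Submodule.span ℝ {x | ∃ (g : Lp ℝ 2 P) (z : Zd d), x = g - koop P τ hτmp z g}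

lemma Lp_integrable (P : Measure Ω) [IsProbabilityMeasure P] (g : Lp ℝ 2 P) :
    Integrable g P := (Lp.memLp g).integrable (by norm_num)

lemma good_gen (P : Measure Ω) [IsProbabilityMeasure P] (τ : Zd d → Ω → Ω)
    (hτadd : ∀ x y : Zd d, τ (x + y) = τ x ∘ τ y)
    (hτmp : ∀ z : Zd d, MeasurePreserving (τ z) P P) (g : Ω → ℝ) (hg : Integrable g P)
    (z : Zd d) : Good P τ (g - g ∘ τ z) := by
  have hgz : Integrable (g ∘ τ z) P := (hτmp z).integrable_comp_of_integrable hg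
  refine good_closure P τ hτadd hτmp _ (hg.sub hgz) ?_
  intro δ hδ
  obtain ⟨s, hs, hsm⟩ := (memLp_one_iff_integrable.2 hg).exists_simpleFunc_eLpNorm_sub_lt
    (by norm_num) (ε := δ / 2) (by simpa using hδ)
  have hsi : Integrable s P := memLp_one_iff_integrable.1 hsm
  have hsz : Integrable (s ∘ τ z) P := (hτmp z).integrable_comp_of_integrable hsi
  obtain ⟨C, hC⟩ : ∃ C : ℝ, ∀ ω, |s ω| ≤ C := by
    obtain ⟨C, hC⟩ := s.exists_forall_norm_le
    exact ⟨C, hC⟩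
  refine ⟨s - s ∘ τ z, hsi.sub hsz, good_cobdry P τ hτadd hτmp s hsi C hC z, ?_⟩
  have e : (g - g ∘ τ z) - (⇑s - ⇑s ∘ τ z) = (g - ⇑s) - (g - ⇑s) ∘ τ z := by
    ext ω; simp; ring
  have e2 : eLpNorm ((g - ⇑s) ∘ τ z) 1 P = eLpNorm (g - ⇑s) 1 P :=
    eLpNorm_comp_measurePreserving (hg.sub hsi).aestronglyMeasurable (hτmp z)
  rw [e]
  refine (eLpNorm_sub_le (hg.sub hsi).aestronglyMeasurable
    ((hτmp z).integrable_comp_of_integrable (hg.sub hsi)).aestronglyMeasurable le_rfl).trans ?_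
  rw [e2]
  calc _ ≤ δ / 2 + δ / 2 := add_le_add hs.le hs.le
    _ = δ := ENNReal.add_halves δ

lemma good_cobSpan (P : Measure Ω) [IsProbabilityMeasure P] (τ : Zd d → Ω → Ω)
    (hτadd : ∀ x y : Zd d, τ (x + y) = τ x ∘ τ y)
    (hτmp : ∀ z : Zd d, MeasurePreserving (τ z) P P) (x : Lp ℝ 2 P)
    (hx : x ∈ cobSpan P τ hτmp) : Good P τ x := by
  induction hx using Submodule.span_induction with
  | mem x hx =>
    obtain ⟨g, z, rfl⟩ := hx
    refine good_congr P τ hτmp ?_ (good_gen P τ hτadd hτmp g (Lp_integrable P g) z)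
    filter_upwards [Lp.coeFn_sub g (koop P τ hτmp z g), koop_coe P τ hτmp z g] with ω h1 h2
    rw [h1]
    simp [h2]
  | zero =>
    exact good_congr P τ hτmp (Lp.coeFn_zero ℝ 2 P).symm (good_const P τ 0)
  | add x y _ _ hx hy =>
    exact good_congr P τ hτmp (Lp.coeFn_add x y).symm
      (good_add P τ (Lp_integrable P x) (Lp_integrable P y) hx hy)
  | smul c x _ hx =>
    exact good_congr P τ hτmp (Lp.coeFn_smul c x).symm (good_smul P τ c hx)

lemma good_L2 (P : Measure Ω) [IsProbabilityMeasure P] (τ : Zd d → Ω → Ω) (hτ0 : τ 0 = id)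
    (hτadd : ∀ x y : Zd d, τ (x + y) = τ x ∘ τ y)
    (hτmp : ∀ z : Zd d, MeasurePreserving (τ z) P P)
    (hτerg : ∀ B : Set Ω, MeasurableSet B → (∀ z : Zd d, τ z ⁻¹' B = B) → P B = 0 ∨ P B = 1)
    (v : Lp ℝ 2 P) : Good P τ v := by
  set S := cobSpan P τ hτmp with hS
  set K := S.topologicalClosure with hK
  have : CompleteSpace K := S.isClosed_topologicalClosure.completeSpace_coe
  set s : Lp ℝ 2 P := K.starProjection v with hs
  set w : Lp ℝ 2 P := v - s with hw
  have hsK : s ∈ K := Submodule.starProjection_apply_mem K v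
  have hwK : w ∈ Kᗮ := Submodule.sub_starProjection_mem_orthogonal v
  have hinv : ∀ z, koop P τ hτmp z w = w := by
    intro z
    have hmem : w - koop P τ hτmp z w ∈ K :=
      S.le_topologicalClosure (Submodule.subset_span ⟨w, z, rfl⟩)
    have h0 : inner ℝ (w - koop P τ hτmp z w) w = 0 := hwK _ hmem
    rw [inner_sub_left, real_inner_self_eq_norm_sq] at h0
    have h1 := norm_sub_sq_real (koop P τ hτmp z w) w
    rw [(koop P τ hτmp z).norm_map] at h1
    have : ‖koop P τ hτmp z w - w‖ ^ 2 = 0 := by linarith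
    have : ‖koop P τ hτmp z w - w‖ = 0 := by simpa using this
    exact sub_eq_zero.1 (norm_eq_zero.1 this)
  have hwm := Lp.stronglyMeasurable w
  obtain ⟨c, hc⟩ := inv_const P τ hτ0 hτadd hτmp hτerg w hwm.measurable fun z => by
    have := koop_coe P τ hτmp z w
    rw [hinv z] at this
    exact this.symm
  have hgw : Good P τ w := good_congr P τ hτmp hc.symm (good_const P τ c)
  refine good_closure P τ hτadd hτmp _ (Lp_integrable P v) ?_
  intro δ hδ
  have hsc : s ∈ closure (S : Set (Lp ℝ 2 P)) := hsK
  obtain ⟨x, hxS, hx⟩ := EMetric.mem_closure_iff.1 hsc δ (pos_iff_ne_zero.2 hδ)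
  refine ⟨x + w, (Lp_integrable P x).add (Lp_integrable P w),
    good_add P τ (Lp_integrable P x) (Lp_integrable P w) (good_cobSpan P τ hτadd hτmp x hxS) hgw,
    ?_⟩
  refine (eLpNorm_le_eLpNorm_of_exponent_le (q := 2) (by norm_num)
    ((Lp.aestronglyMeasurable v).sub
      ((Lp.aestronglyMeasurable x).add (Lp.aestronglyMeasurable w)))).trans ?_
  rw [Lp.edist_def] at hx
  refine le_trans (le_of_eq (eLpNorm_congr_ae ?_)) hx.le
  filter_upwards [Lp.coeFn_sub v s] with ω h1
  have : w ω = v ω - s ω := by rw [hw, h1]; rfl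
  simp only [Pi.sub_apply, Pi.add_apply, this]
  ring

/-- The pointwise ergodic theorem for `ℤ^d`-actions along scaled boxes. -/
lemma good_L1 (P : Measure Ω) [IsProbabilityMeasure P] (τ : Zd d → Ω → Ω) (hτ0 : τ 0 = id)
    (hτadd : ∀ x y : Zd d, τ (x + y) = τ x ∘ τ y)
    (hτmp : ∀ z : Zd d, MeasurePreserving (τ z) P P)
    (hτerg : ∀ B : Set Ω, MeasurableSet B → (∀ z : Zd d, τ z ⁻¹' B = B) → P B = 0 ∨ P B = 1)
    (f : Ω → ℝ) (hf : Integrable f P) : Good P τ f := by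
  refine good_closure P τ hτadd hτmp _ hf fun δ hδ => ?_
  obtain ⟨s, hs, hsm⟩ := (memLp_one_iff_integrable.2 hf).exists_simpleFunc_eLpNorm_sub_lt
    (by norm_num) hδ
  have hs2 : MemLp s 2 P := s.memLp_of_isFiniteMeasure 2 P
  exact ⟨s, memLp_one_iff_integrable.1 hsm, good_congr P τ hτmp hs2.coeFn_toLp
    (good_L2 P τ hτ0 hτadd hτmp hτerg hs2.toLp), hs.le⟩

/-- Weighted Hölder inequality. -/
lemma weighted_holder {ι : Type*} (s : Finset ι) (l D : ι → ℝ) (p β : ℝ) (hβ : 0 < β)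
    (hl : ∀ i ∈ s, 0 < l i) (hD : ∀ i ∈ s, 0 ≤ D i) :
    ∑ i ∈ s, D i ^ (p * β / (β + 1)) ≤
      (∑ i ∈ s, l i * D i ^ p) ^ (β / (β + 1)) * (∑ i ∈ s, l i ^ (-β)) ^ (1 / (β + 1)) := by
  have hβ1 : 0 < β + 1 := by linarith
  have hc : Real.HolderConjugate ((β + 1) / β) (β + 1) := by
    rw [Real.holderConjugate_iff]
    refine ⟨by rw [lt_div_iff₀ hβ]; linarith, ?_⟩
    field_simp
  have h := Real.inner_le_Lp_mul_Lq_of_nonneg s (f := fun i => (l i * D i ^ p) ^ (β / (β + 1)))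
    (g := fun i => l i ^ (-(β / (β + 1)))) hc
    (fun i hi => Real.rpow_nonneg (mul_nonneg (hl i hi).le (Real.rpow_nonneg (hD i hi) _)) _)
    (fun i hi => Real.rpow_nonneg (hl i hi).le _)
  have e1 : ∑ i ∈ s, (l i * D i ^ p) ^ (β / (β + 1)) * l i ^ (-(β / (β + 1)))
      = ∑ i ∈ s, D i ^ (p * β / (β + 1)) := by
    refine Finset.sum_congr rfl fun i hi => ?_
    have hDp := Real.rpow_nonneg (hD i hi) p
    rw [Real.mul_rpow (hl i hi).le hDp, ← Real.rpow_mul (hD i hi), mul_right_comm,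
      ← Real.rpow_add (hl i hi), add_neg_cancel, Real.rpow_zero, one_mul, mul_div_assoc]
  have e2 : ∑ i ∈ s, ((l i * D i ^ p) ^ (β / (β + 1))) ^ ((β + 1) / β)
      = ∑ i ∈ s, l i * D i ^ p := by
    refine Finset.sum_congr rfl fun i hi => ?_
    rw [← Real.rpow_mul (mul_nonneg (hl i hi).le (Real.rpow_nonneg (hD i hi) _))]
    have : β / (β + 1) * ((β + 1) / β) = 1 := by field_simp
    rw [this, Real.rpow_one]
  have e3 : ∑ i ∈ s, (l i ^ (-(β / (β + 1)))) ^ (β + 1) = ∑ i ∈ s, l i ^ (-β) := by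
    refine Finset.sum_congr rfl fun i hi => ?_
    rw [← Real.rpow_mul (hl i hi).le]
    congr 1
    field_simp
  rw [e1, e2, e3] at h
  have e4 : 1 / ((β + 1) / β) = β / (β + 1) := by field_simp
  rwa [e4] at h

lemma stdb_injective : Function.Injective (stdb : Fin d → Zd d) := by
  intro i j h
  have := congrFun h i
  by_contra hne
  simp [stdb, hne] at this

/-- The deterministic limsup argument. -/
lemma limsup_arg (F E Λ Y : ℝ → ℝ) (c θ η L y : ℝ) (hc : 0 < c) (hθ : 0 < θ) (hη : 0 < η)
    (hF0 : ∀ ε, 0 < ε → 0 ≤ F ε) (hY0 : ∀ ε, 0 < ε → 0 ≤ Y ε)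
    (hX0 : ∀ ε, 0 < ε → 0 ≤ c * E ε + c ^ 2 * Λ ε)
    (hFle : ∀ ε, 0 < ε → F ε ≤ (c * E ε + c ^ 2 * Λ ε) ^ θ * Y ε ^ η)
    (hΛ : Tendsto Λ (𝓝[>] 0) (𝓝 L)) (hY : Tendsto Y (𝓝[>] 0) (𝓝 y))
    (hE : IsBoundedUnder (· ≤ ·) (𝓝[>] (0 : ℝ)) E) :
    IsBoundedUnder (· ≤ ·) (𝓝[>] (0 : ℝ)) F ∧
      limsup F (𝓝[>] (0 : ℝ)) ≤ (c * limsup E (𝓝[>] (0 : ℝ)) + c ^ 2 * L) ^ θ * y ^ η := by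
  have hR : ∀ e, Tendsto (fun ε => (c * e + c ^ 2 * Λ ε) ^ θ * Y ε ^ η) (𝓝[>] 0)
      (𝓝 ((c * e + c ^ 2 * L) ^ θ * y ^ η)) := fun e =>
    ((tendsto_const_nhds.add (hΛ.const_mul _)).rpow_const (Or.inr hθ.le)).mul
      (hY.rpow_const (Or.inr hη.le))
  have hle : ∀ e, limsup E (𝓝[>] (0 : ℝ)) < e → ∀ᶠ ε in 𝓝[>] (0 : ℝ),
      F ε ≤ (c * e + c ^ 2 * Λ ε) ^ θ * Y ε ^ η := by
    intro e he
    filter_upwards [eventually_lt_of_limsup_lt he hE, self_mem_nhdsWithin] with ε h1 h2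
    have h2 : 0 < ε := h2
    refine (hFle ε h2).trans ?_
    have := hX0 ε h2
    have := hY0 ε h2
    gcongr
  have hFb : IsBoundedUnder (· ≤ ·) (𝓝[>] (0 : ℝ)) F :=
    (hR (limsup E (𝓝[>] (0 : ℝ)) + 1)).isBoundedUnder_le.mono_le (hle _ (lt_add_one _))
  refine ⟨hFb, ?_⟩
  have hFc : IsCoboundedUnder (· ≤ ·) (𝓝[>] (0 : ℝ)) F := by
    refine IsBoundedUnder.isCoboundedUnder_le ⟨0, ?_⟩
    rw [eventually_map]
    filter_upwards [self_mem_nhdsWithin] with ε h2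
    exact hF0 ε h2
  have hfin : ∀ e, limsup E (𝓝[>] (0 : ℝ)) < e →
      limsup F (𝓝[>] (0 : ℝ)) ≤ (c * e + c ^ 2 * L) ^ θ * y ^ η := by
    intro e he
    rw [← (hR e).limsup_eq]
    exact limsup_le_limsup (hle e he) hFc (hR e).isBoundedUnder_le
  set e0 := limsup E (𝓝[>] (0 : ℝ))
  have ht : Tendsto (fun e => (c * e + c ^ 2 * L) ^ θ * y ^ η) (𝓝[>] e0)
      (𝓝 ((c * e0 + c ^ 2 * L) ^ θ * y ^ η)) := by
    have h1 : Tendsto (fun e : ℝ => c * e + c ^ 2 * L) (𝓝[>] e0) (𝓝 (c * e0 + c ^ 2 * L)) := by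
      have : Continuous fun e : ℝ => c * e + c ^ 2 * L := by fun_prop
      exact (this.tendsto e0).mono_left nhdsWithin_le_nhds
    exact (h1.rpow_const (Or.inr hθ.le)).mul_const _
  refine ge_of_tendsto ht ?_
  filter_upwards [self_mem_nhdsWithin] with e he
  exact hfin e he

/-- discrete coercivity estimate, Step 1 of the proof of Lemma 3.6. -/
theorem coercivity_estimate
    {d n : ℕ} (hd : 2 ≤ d) (hn : 1 ≤ n)
    {Ω : Type*} [MeasurableSpace Ω] (P : Measure Ω) [IsProbabilityMeasure P]
    (τ : Zd d → Ω → Ω) (hτ0 : τ 0 = id)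
    (hτadd : ∀ x y : Zd d, τ (x + y) = τ x ∘ τ y)
    (hτmp : ∀ z : Zd d, MeasurePreserving (τ z) P P)
    (hτerg : ∀ B : Set Ω, MeasurableSet B → (∀ z : Zd d, τ z ⁻¹' B = B) → P B = 0 ∨ P B = 1)
    (E0 : Finset (Zd d)) (hE00 : (0 : Zd d) ∉ E0) (hE0b : ∀ i : Fin d, stdb i ∈ E0)
    (p c₁ : ℝ) (hp : 1 < p) (hc₁ : 0 < c₁)
    (V : Zd d → Ω → Rn n → ℝ)
    (hVmeas : ∀ b ∈ E0, Measurable fun q : Ω × Rn n => V b q.1 q.2)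
    (hVcont : ∀ b ∈ E0, ∀ ω : Ω, Continuous (V b ω))
    (hVnn : ∀ b ∈ E0, ∀ (ω : Ω) (r : Rn n), 0 ≤ V b ω r)
    (lam : Zd d → Ω → ℝ)
    (hlammeas : ∀ b ∈ E0, Measurable (lam b))
    (hlamnn : ∀ b ∈ E0, ∀ ω : Ω, 0 ≤ lam b ω)
    (hgrowth : ∀ b ∈ E0, ∀ (ω : Ω) (r : Rn n),
      lam b ω * (‖r‖ ^ p / c₁ - c₁) ≤ V b ω r ∧ V b ω r ≤ c₁ * (1 + lam b ω * (‖r‖ ^ p + 1)))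
    (α β : ℝ) (hα : 1 ≤ α) (hβ : 1 / (p - 1) ≤ β)
    (hmomα : ∀ b ∈ E0, ∫⁻ ω, ENNReal.ofReal (lam b ω ^ α) ∂P < ⊤)
    (hmomβ : ∀ i : Fin d, ∫⁻ ω, ENNReal.ofReal (lam (stdb i) ω) ^ (-β) ∂P < ⊤)
    : ∃ Ω₀ : Set Ω, MeasurableSet Ω₀ ∧ P Ω₀ = 1 ∧
      ∀ ω ∈ Ω₀, ∀ a b : Fin d → ℝ, ∀ uε : ℝ → Zd d → Rn n,
        IsBoundedUnder (· ≤ ·) (𝓝[>] (0 : ℝ))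
          (fun ε => energyE τ E0 V ε ω (uε ε) (halfBox a b)) →
        (IsBoundedUnder (· ≤ ·) (𝓝[>] (0 : ℝ)) (fun ε : ℝ => ε ^ d * ∑' z : Zd d,
            if ε • toRd z ∈ halfBox a b then
              ∑ i : Fin d,
                ‖(ε * ‖toRd (stdb i)‖)⁻¹ • (uε ε (z + stdb i) - uε ε z)‖ ^ (p * β / (β + 1))
            else 0) ∧
          limsup (fun ε : ℝ => ε ^ d * ∑' z : Zd d,
              if ε • toRd z ∈ halfBox a b then
                ∑ i : Fin d,
                  ‖(ε * ‖toRd (stdb i)‖)⁻¹ • (uε ε (z + stdb i) - uε ε z)‖ ^ (p * β / (β + 1))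
              else 0) (𝓝[>] (0 : ℝ)) ≤
            (c₁ * limsup (fun ε => energyE τ E0 V ε ω (uε ε) (halfBox a b)) (𝓝[>] (0 : ℝ)) +
                c₁ ^ 2 * (volume (halfBox a b)).toReal *
                  ∑ i : Fin d, ∫ ω', lam (stdb i) ω' ∂P) ^ (β / (β + 1)) *
              ((volume (halfBox a b)).toReal *
                ∑ i : Fin d,
                  (∫⁻ ω', ENNReal.ofReal (lam (stdb i) ω') ^ (-β) ∂P).toReal) ^ (1 / (β + 1))) := by
  have hβ0 : 0 < β := lt_of_lt_of_le (by have : 0 < p - 1 := by linarith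
                                         positivity) hβ
  have hβ1 : 0 < β + 1 := by linarith
  have hnn : ∀ i ω, 0 ≤ lam (stdb i) ω := fun i => hlamnn _ (hE0b i)
  have hmeas : ∀ i, Measurable (lam (stdb i)) := fun i => hlammeas _ (hE0b i)
  -- integrability
  have hint : ∀ i, Integrable (lam (stdb i)) P := by
    intro i
    refine ⟨(hmeas i).aestronglyMeasurable, ?_⟩
    rw [hasFiniteIntegral_iff_ofReal (Eventually.of_forall (hnn i))]
    have hle : ∀ ω, ENNReal.ofReal (lam (stdb i) ω)
        ≤ 1 + ENNReal.ofReal (lam (stdb i) ω ^ α) := by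
      intro ω
      rw [← ENNReal.ofReal_one, ← ENNReal.ofReal_add zero_le_one (Real.rpow_nonneg (hnn i ω) _)]
      refine ENNReal.ofReal_le_ofReal ?_
      rcases le_total (lam (stdb i) ω) 1 with h | h
      · linarith [Real.rpow_nonneg (hnn i ω) α]
      · linarith [Real.self_le_rpow_of_one_le h hα]
    refine lt_of_le_of_lt (lintegral_mono hle) ?_
    rw [lintegral_add_left measurable_const]
    refine ENNReal.add_lt_top.2 ⟨by simp, hmomα _ (hE0b i)⟩
  have hmE : ∀ i, Measurable fun ω => ENNReal.ofReal (lam (stdb i) ω) ^ (-β) := fun i =>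
    (hmeas i).ennreal_ofReal.pow_const _
  let g : Fin d → Ω → ℝ := fun i ω => (ENNReal.ofReal (lam (stdb i) ω) ^ (-β)).toReal
  have hgint : ∀ i, Integrable (g i) P := fun i =>
    integrable_toReal_of_lintegral_ne_top (hmE i).aemeasurable (hmomβ i).ne
  have hfin : ∀ i, ∀ᵐ ω ∂P, ENNReal.ofReal (lam (stdb i) ω) ^ (-β) < ⊤ := fun i =>
    ae_lt_top (hmE i) (hmomβ i).ne
  have hgI : ∀ i, ∫ ω, g i ω ∂P = (∫⁻ ω', ENNReal.ofReal (lam (stdb i) ω') ^ (-β) ∂P).toReal :=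
    fun i => integral_toReal (hmE i).aemeasurable (hfin i)
  have hpos : ∀ i, ∀ᵐ ω ∂P, ∀ z, 0 < lam (stdb i) (τ z ω) := by
    intro i
    refine ae_all_shift hτmp (q := fun ω => 0 < lam (stdb i) ω) ?_
    filter_upwards [hfin i] with ω hω
    rcases (hnn i ω).lt_or_eq with h | h
    · exact h
    · rw [← h, ENNReal.ofReal_zero, ENNReal.zero_rpow_of_neg (by linarith)] at hω
      exact absurd hω (lt_irrefl _)
  have hev : ∀ᵐ ω ∂P, ∀ i : Fin d, (∀ z, 0 < lam (stdb i) (τ z ω)) ∧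
      (∀ a b : Fin d → ℝ, Tendsto (fun ε : ℝ => ε ^ d * ∑ z ∈ bix a b ε, lam (stdb i) (τ z ω))
        (𝓝[>] 0) (𝓝 ((∏ i, max (b i - a i) 0) * ∫ ω', lam (stdb i) ω' ∂P))) ∧
      (∀ a b : Fin d → ℝ, Tendsto (fun ε : ℝ => ε ^ d * ∑ z ∈ bix a b ε, g i (τ z ω))
        (𝓝[>] 0) (𝓝 ((∏ i, max (b i - a i) 0) * ∫ ω', g i ω' ∂P))) := by
    refine ae_all_iff.2 fun i => ?_
    filter_upwards [hpos i, good_L1 P τ hτ0 hτadd hτmp hτerg _ (hint i),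
      good_L1 P τ hτ0 hτadd hτmp hτerg _ (hgint i)] with ω h1 h2 h3
    exact ⟨h1, h2, h3⟩
  obtain ⟨Ω₀, hΩ₀, hΩ₀m, hω₀⟩ := hev.exists_measurable_mem
  refine ⟨Ω₀, hΩ₀m, (mem_ae_iff_prob_eq_one hΩ₀m).1 hΩ₀, ?_⟩
  intro ω hω a b uε hE
  have H := hω₀ ω hω
  set vol : ℝ := ∏ i, max (b i - a i) 0 with hvol
  rw [volume_halfBox, ← hvol]
  let D : ℝ → Zd d → Fin d → ℝ := fun ε z i =>
    ‖(ε * ‖toRd (stdb i)‖)⁻¹ • (uε ε (z + stdb i) - uε ε z)‖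
  let Λ : ℝ → ℝ := fun ε => ∑ i, ε ^ d * ∑ z ∈ bix a b ε, lam (stdb i) (τ z ω)
  let Y : ℝ → ℝ := fun ε => ∑ i, ε ^ d * ∑ z ∈ bix a b ε, g i (τ z ω)
  have hΛ : Tendsto Λ (𝓝[>] 0) (𝓝 (vol * ∑ i, ∫ ω', lam (stdb i) ω' ∂P)) := by
    rw [Finset.mul_sum]
    exact tendsto_finsetSum _ fun i _ => (H i).2.1 a b
  have hY : Tendsto Y (𝓝[>] 0) (𝓝 (vol * ∑ i,
      (∫⁻ ω', ENNReal.ofReal (lam (stdb i) ω') ^ (-β) ∂P).toReal)) := by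
    rw [Finset.mul_sum]
    refine tendsto_finsetSum _ fun i _ => ?_
    rw [← hgI i]
    exact (H i).2.2 a b
  have hg : ∀ i z, g i (τ z ω) = lam (stdb i) (τ z ω) ^ (-β) := by
    intro i z
    simp only [g]
    rw [ENNReal.ofReal_rpow_of_pos ((H i).1 z), ENNReal.toReal_ofReal]
    exact Real.rpow_nonneg (hnn i _) _
  -- coercivity
  have hX : ∀ ε, 0 < ε → ε ^ d * ∑ z ∈ bix a b ε, ∑ i, lam (stdb i) (τ z ω) * D ε z i ^ p
      ≤ c₁ * energyE τ E0 V ε ω (uε ε) (halfBox a b) + c₁ ^ 2 * Λ ε := by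
    intro ε hε
    have hen : energyE τ E0 V ε ω (uε ε) (halfBox a b) = ε ^ d * ∑ z ∈ bix a b ε,
        ∑ b ∈ E0, V b (τ z ω) ((ε * ‖toRd b‖)⁻¹ • (uε ε (z + b) - uε ε z)) := by
      rw [energyE, tsum_bix hε]
    have hΛe : Λ ε = ε ^ d * ∑ z ∈ bix a b ε, ∑ i, lam (stdb i) (τ z ω) := by
      simp only [Λ]
      rw [← Finset.mul_sum, Finset.sum_comm]
    have hcomb : c₁ * energyE τ E0 V ε ω (uε ε) (halfBox a b) + c₁ ^ 2 * Λ ε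
        = ε ^ d * ∑ z ∈ bix a b ε,
          (c₁ * ∑ b ∈ E0, V b (τ z ω) ((ε * ‖toRd b‖)⁻¹ • (uε ε (z + b) - uε ε z))
            + c₁ ^ 2 * ∑ i, lam (stdb i) (τ z ω)) := by
      rw [hen, hΛe, Finset.sum_add_distrib, ← Finset.mul_sum, ← Finset.mul_sum]
      ring
    rw [hcomb]
    refine mul_le_mul_of_nonneg_left (Finset.sum_le_sum fun z _ => ?_) (by positivity)
    have hsub : ∑ i : Fin d, V (stdb i) (τ z ω)
          ((ε * ‖toRd (stdb i)‖)⁻¹ • (uε ε (z + stdb i) - uε ε z))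
        ≤ ∑ b ∈ E0, V b (τ z ω) ((ε * ‖toRd b‖)⁻¹ • (uε ε (z + b) - uε ε z)) := by
      rw [← Finset.sum_image (s := Finset.univ) (g := stdb)
        (f := fun b => V b (τ z ω) ((ε * ‖toRd b‖)⁻¹ • (uε ε (z + b) - uε ε z)))
        (stdb_injective.injOn)]
      refine Finset.sum_le_sum_of_subset_of_nonneg ?_ fun b hb _ => hVnn b hb _ _
      intro x hx
      obtain ⟨i, _, rfl⟩ := Finset.mem_image.1 hx
      exact hE0b i
    refine le_trans ?_ (add_le_add_left (mul_le_mul_of_nonneg_left hsub hc₁.le) _)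
    rw [Finset.mul_sum, Finset.mul_sum, ← Finset.sum_add_distrib]
    refine Finset.sum_le_sum fun i _ => ?_
    have := (hgrowth (stdb i) (hE0b i) (τ z ω)
      ((ε * ‖toRd (stdb i)‖)⁻¹ • (uε ε (z + stdb i) - uε ε z))).1
    have h2 := mul_le_mul_of_nonneg_left this hc₁.le
    have h3 : c₁ * (lam (stdb i) (τ z ω) * (D ε z i ^ p / c₁ - c₁))
        = lam (stdb i) (τ z ω) * D ε z i ^ p - c₁ ^ 2 * lam (stdb i) (τ z ω) := by
      field_simp
    change c₁ * (lam (stdb i) (τ z ω) * (D ε z i ^ p / c₁ - c₁)) ≤ _ at h2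
    rw [h3] at h2
    linarith
  have hX0 : ∀ ε, 0 < ε →
      0 ≤ ε ^ d * ∑ z ∈ bix a b ε, ∑ i, lam (stdb i) (τ z ω) * D ε z i ^ p := by
    intro ε hε
    refine mul_nonneg (by positivity) (Finset.sum_nonneg fun z _ => Finset.sum_nonneg fun i _ =>
      mul_nonneg (hnn i _) (Real.rpow_nonneg (norm_nonneg _) _))
  have hY0 : ∀ ε, 0 < ε → 0 ≤ Y ε := fun ε hε => Finset.sum_nonneg fun i _ =>
    mul_nonneg (by positivity) (Finset.sum_nonneg fun z _ => ENNReal.toReal_nonneg)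
  have hFe : ∀ ε, 0 < ε → (ε ^ d * ∑' z : Zd d,
      if ε • toRd z ∈ halfBox a b then ∑ i : Fin d,
        ‖(ε * ‖toRd (stdb i)‖)⁻¹ • (uε ε (z + stdb i) - uε ε z)‖ ^ (p * β / (β + 1)) else 0)
      = ε ^ d * ∑ z ∈ bix a b ε, ∑ i : Fin d, D ε z i ^ (p * β / (β + 1)) := by
    intro ε hε
    rw [tsum_bix hε]
  have key := limsup_arg (fun ε : ℝ => ε ^ d * ∑' z : Zd d,
      if ε • toRd z ∈ halfBox a b then ∑ i : Fin d,
        ‖(ε * ‖toRd (stdb i)‖)⁻¹ • (uε ε (z + stdb i) - uε ε z)‖ ^ (p * β / (β + 1)) else 0)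
    (fun ε => energyE τ E0 V ε ω (uε ε) (halfBox a b)) Λ Y c₁ (β / (β + 1)) (1 / (β + 1)) _ _
    hc₁ (by positivity) (by positivity) ?_ hY0
    (fun ε hε => (hX0 ε hε).trans (hX ε hε)) ?_ hΛ hY hE
  · rw [← mul_assoc] at key
    exact key
  · intro ε hε
    rw [hFe ε hε]
    exact mul_nonneg (by positivity) (Finset.sum_nonneg fun z _ => Finset.sum_nonneg fun i _ =>
      Real.rpow_nonneg (norm_nonneg _) _)
  · intro ε hε
    rw [hFe ε hε]
    have hh := weighted_holder (bix a b ε ×ˢ (Finset.univ : Finset (Fin d)))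
      (fun x => lam (stdb x.2) (τ x.1 ω)) (fun x => D ε x.1 x.2) p β hβ0
      (fun x _ => (H x.2).1 x.1) (fun x _ => norm_nonneg _)
    rw [Finset.sum_product, Finset.sum_product, Finset.sum_product] at hh
    simp only at hh
    have hεd : 0 < ε ^ d := by positivity
    have hYe : Y ε = ε ^ d * ∑ z ∈ bix a b ε, ∑ i, lam (stdb i) (τ z ω) ^ (-β) := by
      simp only [Y, hg]
      rw [← Finset.mul_sum, Finset.sum_comm]
    set A1 := ∑ z ∈ bix a b ε, ∑ i, lam (stdb i) (τ z ω) * D ε z i ^ p with hA1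
    set A2 := ∑ z ∈ bix a b ε, ∑ i, lam (stdb i) (τ z ω) ^ (-β) with hA2
    have hA1n : 0 ≤ A1 := Finset.sum_nonneg fun z _ => Finset.sum_nonneg fun i _ =>
      mul_nonneg (hnn i _) (Real.rpow_nonneg (norm_nonneg _) _)
    have hA2n : 0 ≤ A2 := Finset.sum_nonneg fun z _ => Finset.sum_nonneg fun i _ =>
      Real.rpow_nonneg (hnn i _) _
    have hsplit : (ε ^ d * A1) ^ (β / (β + 1)) * (ε ^ d * A2) ^ (1 / (β + 1))
        = ε ^ d * (A1 ^ (β / (β + 1)) * A2 ^ (1 / (β + 1))) := by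
      rw [Real.mul_rpow hεd.le hA1n, Real.mul_rpow hεd.le hA2n, mul_mul_mul_comm,
        ← Real.rpow_add hεd]
      have : β / (β + 1) + 1 / (β + 1) = 1 := by field_simp
      rw [this, Real.rpow_one]
    calc _ ≤ ε ^ d * (A1 ^ (β / (β + 1)) * A2 ^ (1 / (β + 1))) :=
          mul_le_mul_of_nonneg_left hh hεd.le
      _ = (ε ^ d * A1) ^ (β / (β + 1)) * (ε ^ d * A2) ^ (1 / (β + 1)) := hsplit.symm
      _ ≤ _ := by
        rw [hYe]
        have := hX ε hε
        have h0 := hX0 ε hε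
        gcongr

end StochHom
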